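/- Let P > 0, let X be a real random variable with E[X²] ≤ P, and let Z ~ N(0,1) be independent of X. Then D( P_{X+Z} ‖ N(0, 1+P) ) ≤ (1/2) ln(1+P) − I(X; X+Z), where I(X; X+Z) is the mutual information between X and X+Z. -/

import Mathlib

open MeasureTheory ProbabilityTheory

open scoped Classical in
/-- Kullback–Leibler divergence (natural logarithm), valued in `EReal`:
`D(μ‖ν) = ∫ log(dμ/dν) dμ` if `μ ≪ ν` and the log-likelihood ratio is integrable,
and `+∞` otherwise. -/
noncomputable def klDiv {α : Type*} [MeasurableSpace α] (μ ν : Measure α) : EReal :=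
  if μ ≪ ν ∧ Integrable (llr μ ν) μ then ((∫ x, llr μ ν x ∂μ : ℝ) : EReal) else ⊤

/-- The mutual information `I(X; Y)` of two real random variables: the KL divergence between
the joint law of `(X, Y)` and the product of its marginals. -/
noncomputable def mutInfoRV {Ω : Type*} [MeasureSpace Ω] (X Y : Ω → ℝ) : EReal :=
  klDiv (Measure.map (fun ω => (X ω, Y ω)) ℙ)
    ((Measure.map (fun ω => (X ω, Y ω)) ℙ).fst.prod (Measure.map (fun ω => (X ω, Y ω)) ℙ).snd)

/-!
For a joint law `J` of an input and an output and any law `ν` on the output space, the chain rule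
gives the golden formula `D(J‖J₁ ⊗ ν) = D(J₂‖ν) + D(J‖J₁ ⊗ J₂)`, whose last term is the mutual
information. When the output is the input plus independent `N(0, v)` noise and `ν = N(0, w)`, the
left-hand side is the average of `D(N(x, v)‖N(0, w))` over the input law. This divergence is affine
in `x²`, so the average depends on the input only through `E[X²]`, and for `w = v + P` it is at most
the capacity `½ log (1 + P / v)`.
-/

open scoped ENNReal NNReal

section KullbackLeibler

variable {α β : Type*} {mα : MeasurableSpace α} {mβ : MeasurableSpace β}

lemma klDiv_eq_coe_klDiv {μ ν : Measure α} [IsFiniteMeasure μ] [IsFiniteMeasure ν]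
    (h_univ : μ Set.univ = ν Set.univ) :
    klDiv μ ν = (InformationTheory.klDiv μ ν : EReal) := by
  by_cases h : μ ≪ ν ∧ Integrable (llr μ ν) μ
  · have h_ne_top : InformationTheory.klDiv μ ν ≠ ∞ := InformationTheory.klDiv_ne_top h.1 h.2
    rw [klDiv, if_pos h, ← InformationTheory.toReal_klDiv_of_measure_eq h.1 h_univ,
      EReal.coe_ennreal_toReal h_ne_top]
  · have h_top : InformationTheory.klDiv μ ν = ∞ :=
      not_not.1 (mt InformationTheory.klDiv_ne_top_iff.1 h)
    rw [klDiv, if_neg h, h_top, EReal.coe_ennreal_top]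

lemma klDiv_map_measurableEquiv (μ ν : Measure α) [IsFiniteMeasure μ] [IsFiniteMeasure ν]
    (e : α ≃ᵐ β) :
    InformationTheory.klDiv (μ.map e) (ν.map e) = InformationTheory.klDiv μ ν := by
  refine le_antisymm (InformationTheory.klDiv_map_le μ ν e.measurable) ?_
  have h_symm := InformationTheory.klDiv_map_le (μ.map e) (ν.map e) e.symm.measurable
  rwa [e.map_symm_map, e.map_symm_map] at h_symm

lemma klDiv_fst_prod_eq_add [StandardBorelSpace α] (J : Measure (α × β))
    [IsProbabilityMeasure J] (ν : Measure β) [IsFiniteMeasure ν] :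
    InformationTheory.klDiv J (J.fst.prod ν) =
      InformationTheory.klDiv J.snd ν + InformationTheory.klDiv J (J.fst.prod J.snd) := by
  have h_swap (ρ : Measure β) [IsFiniteMeasure ρ] :
      InformationTheory.klDiv J (J.fst.prod ρ) =
        InformationTheory.klDiv (J.map Prod.swap) (ρ.prod J.fst) := by
    rw [← Measure.prod_swap (μ := J.fst)]
    exact (klDiv_map_measurableEquiv J (J.fst.prod ρ) MeasurableEquiv.prodComm).symm
  have : Nonempty α := (nonempty_of_isProbabilityMeasure J).map Prod.fst
  have : IsProbabilityMeasure (J.map Prod.swap) :=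
    Measure.isProbabilityMeasure_map measurable_swap.aemeasurable
  have h_chain := InformationTheory.klDiv_compProd_eq_add (J.map Prod.swap).fst ν
    (J.map Prod.swap).condKernel (Kernel.const β J.fst)
  rwa [Measure.disintegrate, Measure.compProd_const, Measure.compProd_const,
    Measure.fst_map_swap, ← h_swap, ← h_swap] at h_chain

variable [MeasurableSpace.CountableOrCountablyGenerated α β]

lemma rnDeriv_compProd_right (μ : Measure α) [IsFiniteMeasure μ] {κ η : Kernel α β}
    [IsFiniteKernel κ] [IsFiniteKernel η] (h_ac : ∀ᵐ x ∂μ, κ x ≪ η x) :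
    (μ ⊗ₘ κ).rnDeriv (μ ⊗ₘ η) =ᵐ[μ ⊗ₘ η] fun p ↦ κ.rnDeriv η p.1 p.2 := by
  have h_meas : Measurable fun p : α × β ↦ κ.rnDeriv η p.1 p.2 := Kernel.measurable_rnDeriv κ η
  have h_density : μ ⊗ₘ κ = (μ ⊗ₘ η).withDensity fun p ↦ κ.rnDeriv η p.1 p.2 := by
    ext s hs
    rw [Measure.compProd_apply hs, withDensity_apply _ hs, ← lintegral_indicator hs,
      Measure.lintegral_compProd (h_meas.indicator hs)]
    refine lintegral_congr_ae ?_
    filter_upwards [h_ac] with x hx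
    have hs_x : MeasurableSet (Prod.mk x ⁻¹' s) := measurable_prodMk_left hs
    rw [← Kernel.setLIntegral_rnDeriv hx hs_x, ← lintegral_indicator hs_x]
    rfl
  rw [h_density]
  exact Measure.rnDeriv_withDensity _ h_meas

lemma klDiv_compProd_right_of_ac (μ : Measure α) [IsFiniteMeasure μ] {κ η : Kernel α β}
    [IsFiniteKernel κ] [IsFiniteKernel η] (h_ac : ∀ᵐ x ∂μ, κ x ≪ η x) :
    InformationTheory.klDiv (μ ⊗ₘ κ) (μ ⊗ₘ η) =
      ∫⁻ x, InformationTheory.klDiv (κ x) (η x) ∂μ := by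
  have h_meas : Measurable fun p : α × β ↦
      ENNReal.ofReal (InformationTheory.klFun (κ.rnDeriv η p.1 p.2).toReal) := by fun_prop
  calc InformationTheory.klDiv (μ ⊗ₘ κ) (μ ⊗ₘ η)
  _ = ∫⁻ p, ENNReal.ofReal (InformationTheory.klFun ((μ ⊗ₘ κ).rnDeriv (μ ⊗ₘ η) p).toReal)
        ∂(μ ⊗ₘ η) :=
    InformationTheory.klDiv_eq_lintegral_klFun_of_ac
      (Measure.AbsolutelyContinuous.compProd_right h_ac)
  _ = ∫⁻ p, ENNReal.ofReal (InformationTheory.klFun (κ.rnDeriv η p.1 p.2).toReal) ∂(μ ⊗ₘ η) := by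
    refine lintegral_congr_ae ?_
    filter_upwards [rnDeriv_compProd_right μ h_ac] with p hp
    rw [hp]
  _ = ∫⁻ x, ∫⁻ y, ENNReal.ofReal (InformationTheory.klFun (κ.rnDeriv η x y).toReal) ∂(η x) ∂μ :=
    Measure.lintegral_compProd h_meas
  _ = ∫⁻ x, InformationTheory.klDiv (κ x) (η x) ∂μ := by
    refine lintegral_congr_ae ?_
    filter_upwards [h_ac] with x hx
    rw [InformationTheory.klDiv_eq_lintegral_klFun_of_ac hx]
    refine lintegral_congr_ae ?_
    filter_upwards [Kernel.rnDeriv_eq_rnDeriv_measure (κ := κ) (η := η) (a := x)] with y hy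
    rw [hy]

lemma klDiv_compProd_right (μ : Measure α) [IsFiniteMeasure μ] (κ η : Kernel α β)
    [IsFiniteKernel κ] [IsFiniteKernel η] :
    InformationTheory.klDiv (μ ⊗ₘ κ) (μ ⊗ₘ η) =
      ∫⁻ x, InformationTheory.klDiv (κ x) (η x) ∂μ := by
  by_cases h_ac : ∀ᵐ x ∂μ, κ x ≪ η x
  · exact klDiv_compProd_right_of_ac μ h_ac
  · rw [InformationTheory.klDiv_of_not_ac
      (mt Measure.absolutelyContinuous_compProd_right_iff.1 h_ac), eq_comm, eq_top_iff]
    have h_meas : MeasurableSet {x | ¬ κ x ≪ η x} :=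
      (Kernel.measurableSet_absolutelyContinuous κ η).compl
    calc ∞ = ∞ * μ {x | ¬ κ x ≪ η x} := (ENNReal.top_mul (mt ae_iff.2 h_ac)).symm
    _ = ∫⁻ x in {x | ¬ κ x ≪ η x}, InformationTheory.klDiv (κ x) (η x) ∂μ := by
      rw [← setLIntegral_const]
      exact setLIntegral_congr_fun h_meas
        fun x hx ↦ (InformationTheory.klDiv_of_not_ac hx).symm
    _ ≤ ∫⁻ x, InformationTheory.klDiv (κ x) (η x) ∂μ := setLIntegral_le_lintegral _ _

end KullbackLeibler

section Gaussian

variable {v w : ℝ≥0}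

lemma memLp_sub_const_gaussianReal (m c : ℝ) (v : ℝ≥0) :
    MemLp (fun x ↦ x - c) 2 (gaussianReal m v) :=
  (memLp_id_gaussianReal 2).sub (memLp_const c)

lemma integral_sub_sq_gaussianReal (m c : ℝ) (v : ℝ≥0) :
    ∫ x, (x - c) ^ 2 ∂gaussianReal m v = v + (m - c) ^ 2 := by
  have h_mean : ∫ x, (x - c) ∂gaussianReal m v = m - c := by
    have h_int : Integrable (fun x ↦ x) (gaussianReal m v) :=
      (memLp_id_gaussianReal 1).integrable le_rfl
    rw [integral_sub h_int (integrable_const c), integral_id_gaussianReal, integral_const,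
      probReal_univ, one_smul]
  have h_var := variance_eq_sub (memLp_sub_const_gaussianReal m c v)
  rw [variance_sub_const (by fun_prop), variance_fun_id_gaussianReal, h_mean] at h_var
  simp only [Pi.pow_apply] at h_var
  linarith

lemma gaussianReal_absolutelyContinuous_gaussianReal (m₁ m₂ : ℝ) (hv : v ≠ 0) (hw : w ≠ 0) :
    gaussianReal m₁ v ≪ gaussianReal m₂ w :=
  (gaussianReal_absolutelyContinuous m₁ hv).trans (gaussianReal_absolutelyContinuous' m₂ hw)

lemma log_gaussianPDFReal (m : ℝ) (hv : v ≠ 0) (x : ℝ) :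
    Real.log (gaussianPDFReal m v x) =
      -(1 / 2 * Real.log (2 * Real.pi * v)) - (x - m) ^ 2 / (2 * v) := by
  rw [gaussianPDFReal, Real.log_mul (by positivity) (by positivity), Real.log_inv,
    Real.log_sqrt (by positivity), Real.log_exp]
  ring

lemma llr_gaussianReal (m₁ m₂ : ℝ) (hv : v ≠ 0) (hw : w ≠ 0) :
    llr (gaussianReal m₁ v) (gaussianReal m₂ w) =ᵐ[gaussianReal m₁ v] fun x ↦
      1 / 2 * (Real.log (w / v) + (x - m₂) ^ 2 / w - (x - m₁) ^ 2 / v) := by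
  have hv_pos : (0 : ℝ) < v := by positivity
  have hw_pos : (0 : ℝ) < w := by positivity
  have h_ac₁ := gaussianReal_absolutelyContinuous m₁ hv
  have h_ac₂ := gaussianReal_absolutelyContinuous m₂ hw
  filter_upwards [(gaussianReal_absolutelyContinuous_gaussianReal m₁ m₂ hv hw).ae_le
      (Measure.rnDeriv_eq_div h_ac₁ h_ac₂),
    h_ac₁.ae_le (rnDeriv_gaussianReal m₁ v), h_ac₁.ae_le (rnDeriv_gaussianReal m₂ w)]
    with x h_div h_pdf₁ h_pdf₂
  rw [llr, h_div, h_pdf₁, h_pdf₂, ENNReal.toReal_div, toReal_gaussianPDF, toReal_gaussianPDF,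
    Real.log_div (gaussianPDFReal_pos _ _ _ hv).ne' (gaussianPDFReal_pos _ _ _ hw).ne',
    log_gaussianPDFReal _ hv, log_gaussianPDFReal _ hw, Real.log_div hw_pos.ne' hv_pos.ne',
    Real.log_mul (by positivity) hv_pos.ne', Real.log_mul (by positivity) hw_pos.ne']
  ring

lemma klDiv_gaussianReal (m₁ m₂ : ℝ) (hv : v ≠ 0) (hw : w ≠ 0) :
    InformationTheory.klDiv (gaussianReal m₁ v) (gaussianReal m₂ w) =
      ENNReal.ofReal (1 / 2 * (Real.log (w / v) + (v + (m₁ - m₂) ^ 2) / w - 1)) := by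
  have hv_ne : (v : ℝ) ≠ 0 := by exact_mod_cast hv
  have h_llr := llr_gaussianReal m₁ m₂ hv hw
  have h_sq (c : ℝ) : Integrable (fun x ↦ (x - c) ^ 2) (gaussianReal m₁ v) :=
    (memLp_sub_const_gaussianReal m₁ c v).integrable_sq
  have h_log_add : Integrable (fun x ↦ Real.log (w / v) + (x - m₂) ^ 2 / w) (gaussianReal m₁ v) :=
    (integrable_const _).add ((h_sq m₂).div_const _)
  have h_int : Integrable (llr (gaussianReal m₁ v) (gaussianReal m₂ w)) (gaussianReal m₁ v) :=
    (integrable_congr h_llr).2 ((h_log_add.sub ((h_sq m₁).div_const _)).const_mul _)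
  rw [InformationTheory.klDiv_of_ac_of_integrable
      (gaussianReal_absolutelyContinuous_gaussianReal m₁ m₂ hv hw) h_int,
    probReal_univ, probReal_univ, add_sub_cancel_right, integral_congr_ae h_llr,
    integral_const_mul, integral_sub h_log_add ((h_sq m₁).div_const _),
    integral_add (integrable_const _) ((h_sq m₂).div_const _), integral_const, probReal_univ,
    one_smul, integral_div, integral_div, integral_sub_sq_gaussianReal,
    integral_sub_sq_gaussianReal, sub_self, zero_pow two_ne_zero, add_zero, div_self hv_ne]

end Gaussian

section GaussianChannel

/-- The additive white Gaussian noise channel with noise variance `v`: on input `x` it outputs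
`x + Z` with `Z ~ N(0, v)`, that is, a sample of `N(x, v)`. -/
noncomputable def gaussianChannel (v : ℝ≥0) : Kernel ℝ ℝ where
  toFun x := gaussianReal x v
  measurable' := measurable_gaussianReal.comp (measurable_id.prodMk measurable_const)

instance (v : ℝ≥0) : IsMarkovKernel (gaussianChannel v) where
  isProbabilityMeasure x := instIsProbabilityMeasureGaussianReal x v

lemma gaussianChannel_apply (v : ℝ≥0) (x : ℝ) : gaussianChannel v x = gaussianReal x v := rfl

lemma map_prodMk_add_eq_compProd_gaussianChannel {Ω : Type*} {mΩ : MeasurableSpace Ω}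
    {μ : Measure Ω} [IsFiniteMeasure μ] {X Z : Ω → ℝ} {v : ℝ≥0} (hX : AEMeasurable X μ)
    (hZ : HasLaw Z (gaussianReal 0 v) μ) (h_indep : IndepFun X Z μ) :
    μ.map (fun ω ↦ (X ω, X ω + Z ω)) = μ.map X ⊗ₘ gaussianChannel v := by
  have h_shear : Measurable fun p : ℝ × ℝ ↦ (p.1, p.1 + p.2) := by fun_prop
  have h_comp : μ.map (fun ω ↦ (X ω, X ω + Z ω)) =
      ((μ.map X).prod (gaussianReal 0 v)).map fun p ↦ (p.1, p.1 + p.2) := by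
    rw [← hZ.map_eq, ← h_indep.map_prod_eq_prod_map_map hX hZ.aemeasurable,
      AEMeasurable.map_map_of_aemeasurable h_shear.aemeasurable (hX.prodMk hZ.aemeasurable)]
    rfl
  rw [h_comp]
  ext s hs
  rw [Measure.map_apply h_shear hs, Measure.prod_apply (h_shear hs), Measure.compProd_apply hs]
  refine lintegral_congr fun x ↦ ?_
  have h_translate : gaussianReal x v = (gaussianReal 0 v).map (x + ·) := by
    rw [gaussianReal_map_const_add, zero_add]
  rw [gaussianChannel_apply, h_translate,
    Measure.map_apply (measurable_const_add _) (measurable_prodMk_left hs)]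
  rfl

lemma klDiv_compProd_gaussianChannel {μ : Measure ℝ} [IsProbabilityMeasure μ] {v w : ℝ≥0}
    (hv : v ≠ 0) (hw : w ≠ 0) {m : ℝ} (h_int : Integrable (fun x ↦ (x - m) ^ 2) μ) :
    InformationTheory.klDiv (μ ⊗ₘ gaussianChannel v) (μ.prod (gaussianReal m w)) =
      ENNReal.ofReal (1 / 2 * (Real.log (w / v) + (v + ∫ x, (x - m) ^ 2 ∂μ) / w - 1)) := by
  have h_pos : (0 : ℝ) < w / v := by positivity
  have h_nonneg (x : ℝ) : 0 ≤ 1 / 2 * (Real.log (w / v) + (v + (x - m) ^ 2) / w - 1) := by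
    have h_log : 1 - (v / w : ℝ) ≤ Real.log (w / v) := by
      simpa only [inv_div] using Real.one_sub_inv_le_log_of_pos h_pos
    have h_sq : 0 ≤ (x - m) ^ 2 / w := by positivity
    rw [add_div]
    linarith
  have h_add : Integrable (fun x ↦ v + (x - m) ^ 2) μ := (integrable_const _).add h_int
  have h_log_add : Integrable (fun x ↦ Real.log (w / v) + (v + (x - m) ^ 2) / w) μ :=
    (integrable_const _).add (h_add.div_const _)
  have h_kl : Integrable
      (fun x ↦ 1 / 2 * (Real.log (w / v) + (v + (x - m) ^ 2) / w - 1)) μ :=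
    (h_log_add.sub (integrable_const 1)).const_mul _
  rw [← Measure.compProd_const, klDiv_compProd_right]
  simp only [gaussianChannel_apply, Kernel.const_apply, klDiv_gaussianReal _ m hv hw]
  rw [← ofReal_integral_eq_lintegral_ofReal h_kl (ae_of_all _ h_nonneg), integral_const_mul,
    integral_sub h_log_add (integrable_const _),
    integral_add (integrable_const _) (h_add.div_const _), integral_div,
    integral_add (integrable_const _) h_int]
  simp only [integral_const, probReal_univ, one_smul]

lemma klDiv_compProd_gaussianChannel_le {μ : Measure ℝ} [IsProbabilityMeasure μ] {v : ℝ≥0}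
    (hv : v ≠ 0) {m P : ℝ} (h_int : Integrable (fun x ↦ (x - m) ^ 2) μ)
    (h_power : ∫ x, (x - m) ^ 2 ∂μ ≤ P) :
    InformationTheory.klDiv (μ ⊗ₘ gaussianChannel v) (μ.prod (gaussianReal m (v + P).toNNReal)) ≤
      ENNReal.ofReal (1 / 2 * Real.log (1 + P / v)) := by
  have hv_pos : (0 : ℝ) < v := by positivity
  have hP : 0 ≤ P := (integral_nonneg fun x ↦ sq_nonneg (x - m)).trans h_power
  have h_pos : 0 < v + P := by positivity
  have h_ratio : (v + ∫ x, (x - m) ^ 2 ∂μ) / (v + P) ≤ 1 :=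
    div_le_one_of_le₀ (by gcongr) h_pos.le
  rw [klDiv_compProd_gaussianChannel hv (Real.toNNReal_pos.2 h_pos).ne' h_int,
    Real.coe_toNNReal _ h_pos.le, add_div (v : ℝ) P, div_self hv_pos.ne']
  exact ENNReal.ofReal_le_ofReal (by linarith)

end GaussianChannel

section MutualInformation

variable {Ω : Type*} [MeasureSpace Ω] [IsProbabilityMeasure (ℙ : Measure Ω)]

lemma klDiv_map_add_mutInfoRV {X Y : Ω → ℝ} (hX : AEMeasurable X ℙ) (hY : AEMeasurable Y ℙ)
    (ν : Measure ℝ) [IsProbabilityMeasure ν] :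
    klDiv (Measure.map Y ℙ) ν + mutInfoRV X Y =
      (InformationTheory.klDiv (Measure.map (fun ω ↦ (X ω, Y ω)) ℙ)
        ((Measure.map X ℙ).prod ν) : EReal) := by
  have : IsProbabilityMeasure (Measure.map (fun ω ↦ (X ω, Y ω)) ℙ) :=
    Measure.isProbabilityMeasure_map (hX.prodMk hY)
  have h_fst : (Measure.map (fun ω ↦ (X ω, Y ω)) ℙ).fst = Measure.map X ℙ :=
    Measure.fst_map_prodMk₀ hY
  have h_snd : (Measure.map (fun ω ↦ (X ω, Y ω)) ℙ).snd = Measure.map Y ℙ :=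
    Measure.snd_map_prodMk₀ hX
  rw [mutInfoRV, ← h_fst, ← h_snd,
    klDiv_eq_coe_klDiv (by simp only [measure_univ]),
    klDiv_eq_coe_klDiv (by simp only [measure_univ]),
    ← EReal.coe_ennreal_add, ← klDiv_fst_prod_eq_add]

theorem klDiv_output_le_capacity_sub_mutualInfo_general {P : ℝ} {v : ℝ≥0} (hv : v ≠ 0)
    {X Z : Ω → ℝ} (hX : AEMeasurable X ℙ) (hZ : HasLaw Z (gaussianReal 0 v) ℙ)
    (h_indep : IndepFun X Z ℙ) (h_int : Integrable (fun ω ↦ X ω ^ 2) ℙ)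
    (h_power : ∫ ω, X ω ^ 2 ∂ℙ ≤ P) :
    klDiv (Measure.map (fun ω ↦ X ω + Z ω) ℙ) (gaussianReal 0 (v + P).toNNReal) ≤
      ((1 / 2 * Real.log (1 + P / v) : ℝ) : EReal) - mutInfoRV X (fun ω ↦ X ω + Z ω) := by
  have : IsProbabilityMeasure (Measure.map X ℙ) := Measure.isProbabilityMeasure_map hX
  have hP : 0 ≤ P := (integral_nonneg fun ω ↦ sq_nonneg (X ω)).trans h_power
  have h_capacity : 0 ≤ 1 / 2 * Real.log (1 + P / v) :=
    mul_nonneg (by norm_num) (Real.log_nonneg (le_add_of_nonneg_right (by positivity)))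
  have h_int_map : Integrable (fun x ↦ (x - 0) ^ 2) (Measure.map X ℙ) := by
    rw [integrable_map_measure (by fun_prop) hX]
    simpa only [sub_zero, Function.comp_def] using h_int
  have h_power_map : ∫ x, (x - 0) ^ 2 ∂Measure.map X ℙ ≤ P := by
    rw [integral_map hX (by fun_prop)]
    simpa only [sub_zero] using h_power
  rw [EReal.le_sub_iff_add_le (Or.inr (EReal.coe_ne_bot _)) (Or.inr (EReal.coe_ne_top _)),
    klDiv_map_add_mutInfoRV (Y := fun ω ↦ X ω + Z ω) hX (hX.add hZ.aemeasurable),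
    map_prodMk_add_eq_compProd_gaussianChannel hX hZ h_indep,
    ← max_eq_left h_capacity, ← EReal.coe_ennreal_ofReal, EReal.coe_ennreal_le_coe_ennreal_iff]
  exact klDiv_compProd_gaussianChannel_le hv h_int_map h_power_map

end MutualInformation

/-- Let `P > 0`, `X` a real random variable with `E[X²] ≤ P`, and
`Z ~ N(0,1)` independent of `X`. Then
`D(P_{X+Z} ‖ N(0,1+P)) ≤ (1/2) ln(1+P) - I(X; X+Z)`. -/
theorem klDiv_output_le_capacity_sub_mutualInfo
    {Ω : Type*} [MeasureSpace Ω] [IsProbabilityMeasure (ℙ : Measure Ω)]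
    (P : ℝ) (hP : 0 < P)
    (X Z : Ω → ℝ) (hX : Measurable X) (hZ : Measurable Z)
    (hindep : IndepFun X Z ℙ)
    (hZlaw : Measure.map Z ℙ = gaussianReal 0 1)
    (hX2int : Integrable (fun ω => (X ω) ^ 2) ℙ)
    (hX2 : ∫ ω, (X ω) ^ 2 ∂ℙ ≤ P) :
    klDiv (Measure.map (fun ω => X ω + Z ω) ℙ) (gaussianReal 0 (1 + P).toNNReal) ≤
      (((1 / 2) * Real.log (1 + P) : ℝ) : EReal) - mutInfoRV X (fun ω => X ω + Z ω) := by
  simpa using klDiv_output_le_capacity_sub_mutualInfo_general one_ne_zero hX.aemeasurable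
    ⟨hZ.aemeasurable, hZlaw⟩ hindep hX2int hX2
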